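/- Let f, f_n : [0,∞) → [0,∞) (n ∈ ℕ) be non-decreasing, unbounded, right-continuous functions, and let F and F_n denote the closed ranges of f and f_n respectively. If f_n converges to f locally uniformly, then for every x ∈ ℝ, liminf_{n→∞} ρ(x, F_n) ≥ ρ(x, F). -/

import Mathlib

open Set Filter Metric Topology

/-- `f : ℝ → ℝ` represents a non-decreasing, unbounded, right-continuous function
`[0,∞) → [0,∞)`: it is nonnegative, monotone, unbounded and right-continuous on `[0,∞)`. -/
def IsNDRC (f : ℝ → ℝ) : Prop :=
  (∀ s : ℝ, 0 ≤ s → 0 ≤ f s) ∧ MonotoneOn f (Set.Ici 0) ∧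
    (∀ M : ℝ, ∃ s : ℝ, 0 ≤ s ∧ M < f s) ∧
    (∀ s : ℝ, 0 ≤ s → ContinuousWithinAt f (Set.Ici s) s)

/-- The closed range `F = closure {f t : t ≥ 0}`. -/
def crange (f : ℝ → ℝ) : Set ℝ := closure (f '' Set.Ici 0)

/-!
Fix `x`, let `d` be its distance to the range of `f`, and choose `T` with `f T > x + d`. Left of
`T`, uniform convergence keeps the values of `fn n` within `ε` of values of `f`, hence at distance
at least `d - ε` from `x`. Right of `T`, monotonicity keeps them above
`fn n T ≥ f T - ε > x + d - ε`.
-/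

theorem isBoundedUnder_infDist_of_tendsto {ι E : Type*} [PseudoMetricSpace E] {l : Filter ι}
    {A : ι → Set E} {u : ι → E} {y : E} (hu : Tendsto u l (𝓝 y)) (hA : ∀ᶠ i in l, u i ∈ A i)
    (x : E) : IsBoundedUnder (· ≤ ·) l (fun i => infDist x (A i)) :=
  (tendsto_const_nhds.dist hu).isBoundedUnder_le.mono_le
    (hA.mono fun _ => infDist_le_dist_of_mem)

section MonotoneOn

variable {α : Type*} [LinearOrder α] {s : Set α}

theorem infDist_image_le_infDist_image_add_of_monotoneOn {f g : α → ℝ} {T : α} {x ε : ℝ}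
    (hg : MonotoneOn g s) (hT : T ∈ s) (hfT : x + infDist x (f '' s) ≤ f T)
    (hfg : ∀ a ∈ s ∩ Iic T, dist (f a) (g a) ≤ ε) :
    infDist x (f '' s) ≤ infDist x (g '' s) + ε := by
  rw [← sub_le_iff_le_add, le_infDist (Set.Nonempty.image g ⟨T, hT⟩), forall_mem_image]
  intro a ha
  rw [sub_le_iff_le_add]
  rcases le_total a T with haT | hTa
  · calc infDist x (f '' s) ≤ dist x (f a) := infDist_le_dist_of_mem (mem_image_of_mem f ha)
      _ ≤ dist x (g a) + dist (f a) (g a) := dist_triangle_right x (f a) (g a)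
      _ ≤ dist x (g a) + ε := by gcongr; exact hfg a ⟨ha, haT⟩
  · calc infDist x (f '' s) ≤ f T - x := by linarith
      _ = (g T - x) + (f T - g T) := by ring
      _ ≤ (g a - x) + (f T - g T) := by gcongr; exact hg hT ha hTa
      _ ≤ dist x (g a) + dist (f T) (g T) := by
        rw [dist_comm x]
        exact add_le_add (le_abs_self _) (le_abs_self _)
      _ ≤ dist x (g a) + ε := by gcongr; exact hfg T ⟨hT, le_rfl⟩

theorem stmt4_general {ι : Type*} {l : Filter ι} [l.NeBot] {f : α → ℝ} {F : ι → α → ℝ}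
    (hf : ¬BddAbove (f '' s)) (hF : ∀ᶠ i in l, MonotoneOn (F i) s)
    (hconv : ∀ t ∈ s, TendstoUniformlyOn F f l (s ∩ Iic t)) (x : ℝ) :
    infDist x (f '' s) ≤ liminf (fun i => infDist x (F i '' s)) l := by
  obtain ⟨_, ⟨T, hT, rfl⟩, hfT⟩ := not_bddAbove_iff.1 hf (x + infDist x (f '' s))
  have hbdd : IsBoundedUnder (· ≤ ·) l (fun i => infDist x (F i '' s)) :=
    isBoundedUnder_infDist_of_tendsto ((hconv T hT).tendsto_at ⟨hT, le_rfl⟩)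
      (.of_forall fun i => mem_image_of_mem (F i) hT) x
  refine le_of_forall_sub_le fun ε hε => le_liminf_of_le hbdd.isCoboundedUnder_ge ?_
  filter_upwards [hF, tendstoUniformlyOn_iff.1 (hconv T hT) ε hε] with i hmono hclose
  exact sub_le_iff_le_add.2 <|
    infDist_image_le_infDist_image_add_of_monotoneOn hmono hT hfT.le fun a ha => (hclose a ha).le

end MonotoneOn

theorem IsNDRC.not_bddAbove_image {f : ℝ → ℝ} (hf : IsNDRC f) : ¬BddAbove (f '' Ici 0) := by
  simpa only [not_bddAbove_iff, exists_mem_image, mem_Ici] using hf.2.2.1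

/-- If `fn` are non-decreasing, unbounded, right-continuous functions
`[0,∞) → [0,∞)` converging locally uniformly to such a function `f`, then for every `x`,
`liminf_n ρ(x, Fn) ≥ ρ(x, F)`. -/
theorem stmt4 (f : ℝ → ℝ) (fn : ℕ → ℝ → ℝ)
    (hf : IsNDRC f) (hfn : ∀ n, IsNDRC (fn n))
    (hconv : ∀ t : ℝ, 0 ≤ t → TendstoUniformlyOn fn f atTop (Set.Icc 0 t)) :
    ∀ x : ℝ,
      Metric.infDist x (crange f)
        ≤ Filter.liminf (fun n => Metric.infDist x (crange (fn n))) atTop := by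
  simpa only [crange, infDist_closure] using
    stmt4_general hf.not_bddAbove_image (.of_forall fun n => (hfn n).2.1) hconv
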